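/- arXiv:2510.05554 — 2 statements merged into one kernel-verified Lean document; each statement's English description precedes it below -/
import Mathlib

section
/- Fix $\rho \in (0,1)$, $q > 0$, $\gamma > \frac{1}{1-\rho}$, and $d = d(n) \ge n$. For each $n$, let $x_1,\dots,x_n \in \mathbb{R}^d$ with $\|x_i\|^2 = q$ and pairwise cosine similarity $\rho$, and let $X' = \mathcal{ATT}(\mathcal{N}(X))$ be the attention output (with $\beta = \gamma\log n$, no residual). Then $\frac{1}{nd}\|\nabla_X X'\|_F^2 = \frac{1}{q}\left(1 - \frac{1}{d}\right) + o_n(1)$, where $\|\cdot\|_F$ is the Frobenius norm of the $nd \times nd$ Jacobian. -/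
open scoped RealInnerProductSpace BigOperators

lemma aux_norm_deriv {E : Type*} [NormedAddCommGroup E] [InnerProductSpace ℝ E]
    (x h : E) (hx : x ≠ 0) :
    HasDerivAt (fun t : ℝ => ‖x + t • h‖⁻¹ • (x + t • h))
      (‖x‖⁻¹ • (h - ⟪‖x‖⁻¹ • x, h⟫ • (‖x‖⁻¹ • x))) 0 := by
  have hn : ‖x‖ ≠ 0 := norm_ne_zero_iff.mpr hx
  have h1 : HasDerivAt (fun t : ℝ => x + t • h) h 0 := by
    simpa using ((hasDerivAt_id (0:ℝ)).smul_const h).const_add x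
  have h2 : HasDerivAt (fun t : ℝ => ‖x + t • h‖ ^ 2) (2 * ⟪x, h⟫) 0 := by
    simpa using h1.norm_sq
  have h3 : HasDerivAt (fun t : ℝ => ‖x + t • h‖) (⟪x, h⟫ / ‖x‖) 0 := by
    have := h2.sqrt (by simpa using hx)
    simp only [Real.sqrt_sq (norm_nonneg _), zero_smul, add_zero] at this
    convert this using 1
    field_simp
  have h4 := (h3.fun_inv (by simpa using hx)).fun_smul h1
  convert h4 using 1
  simp only [zero_smul, add_zero, smul_sub, smul_smul, real_inner_smul_left]
  rw [sub_eq_add_neg, ← neg_smul]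
  congr 2
  field_simp

lemma aux_att_deriv {ι E : Type*} [Fintype ι] [NormedAddCommGroup E] [InnerProductSpace ℝ E]
    (Y : ι → ℝ → E) (η : ι → E) (hY : ∀ m, HasDerivAt (Y m) (η m) 0) (β : ℝ) (k : ι)
    (A : ι → ℝ)
    (hA : ∀ m, A m = (∑ l, Real.exp (β * ⟪Y k 0, Y l 0⟫))⁻¹ * Real.exp (β * ⟪Y k 0, Y m 0⟫)) :
    HasDerivAt (fun t => (∑ l, Real.exp (β * ⟪Y k t, Y l t⟫))⁻¹ •
        ∑ m, Real.exp (β * ⟪Y k t, Y m t⟫) • Y m t)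
      (∑ m, A m • η m + β • ∑ m, (A m * (⟪Y k 0, η m⟫ + ⟪η k, Y m 0⟫)) •
        (Y m 0 - ∑ l, A l • Y l 0)) 0 := by
  have hw : ∀ m, HasDerivAt (fun t => Real.exp (β * ⟪Y k t, Y m t⟫))
      (Real.exp (β * ⟪Y k 0, Y m 0⟫) * (β * (⟪Y k 0, η m⟫ + ⟪η k, Y m 0⟫))) 0 := fun m =>
    (((hY k).inner ℝ (hY m)).const_mul β).exp
  have hZ := HasDerivAt.fun_sum (u := Finset.univ) (fun l _ => hw l)
  have hS := HasDerivAt.fun_sum (u := Finset.univ) (fun l _ => (hw l).fun_smul (hY l))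
  have : Nonempty ι := ⟨k⟩
  have hpos : 0 < ∑ l, Real.exp (β * ⟪Y k 0, Y l 0⟫) :=
    Finset.sum_pos (fun _ _ => Real.exp_pos _) Finset.univ_nonempty
  have h := (hZ.fun_inv hpos.ne').fun_smul hS
  convert h using 1
  set Z := ∑ l, Real.exp (β * ⟪Y k 0, Y l 0⟫) with hZd
  have hb : ∑ l, A l • Y l 0 = Z⁻¹ • ∑ m, Real.exp (β * ⟪Y k 0, Y m 0⟫) • Y m 0 := by
    simp only [hA, Finset.smul_sum, smul_smul]
  rw [hb]
  set S := ∑ m, Real.exp (β * ⟪Y k 0, Y m 0⟫) • Y m 0 with hSd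
  simp only [hA, smul_sub, Finset.sum_sub_distrib, Finset.sum_add_distrib, Finset.smul_sum,
    smul_add, ← Finset.sum_smul, smul_smul]
  rw [add_assoc]
  congr 1
  rw [sub_eq_add_neg, ← neg_smul]
  congr 1
  · refine Finset.sum_congr rfl fun m _ => ?_
    congr 1; ring
  · congr 1
    rw [Finset.mul_sum, neg_div, Finset.sum_div]
    congr 1
    refine Finset.sum_congr rfl fun m _ => ?_
    field_simp

lemma aux_bound {ι E : Type*} [Fintype ι] [DecidableEq ι] [NormedAddCommGroup E]
    [InnerProductSpace ℝ E] (y : ι → E) (hy : ∀ i, ‖y i‖ = 1) (A : ι → ι → ℝ) (a b β c : ℝ)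
    (hβ : 0 ≤ β) (hb : 0 ≤ b) (ha : 0 ≤ a)
    (hAd : ∀ k, A k k = a) (hAo : ∀ k m, k ≠ m → A k m = b) (hA1 : ∀ k, ∑ m, A k m = 1)
    (i : ι) (e : E) (he : ‖e‖ ≤ c) (hei : ⟪e, y i⟫ = 0) (η : ι → E) (hη : η = Pi.single i e)
    (D : ι → E) (hD : ∀ k, D k = (∑ m, A k m • η m + β • ∑ m, (A k m * (⟪y k, η m⟫ + ⟪η k, y m⟫)) •
        (y m - ∑ l, A k l • y l))) :
    ‖D i - e‖ ≤ c * ((1 - a) * (1 + 2 * β)) ∧ ∀ k, k ≠ i → ‖D k‖ ≤ c * (b * (1 + 2 * β)) := by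
  have hA0 : ∀ k m, 0 ≤ A k m := by
    intro k m
    by_cases h : k = m
    · subst h; rw [hAd]; exact ha
    · rw [hAo k m h]; exact hb
  have hyb : ∀ k, ‖∑ l, A k l • y l‖ ≤ 1 := by
    intro k
    refine (norm_sum_le _ _).trans ?_
    rw [← hA1 k]
    refine Finset.sum_le_sum fun m _ => ?_
    rw [norm_smul, hy, mul_one, Real.norm_of_nonneg (hA0 k m)]
  have h2 : ∀ k m, ‖y m - ∑ l, A k l • y l‖ ≤ 2 := by
    intro k m
    refine (norm_sub_le _ _).trans ?_
    rw [hy]; linarith [hyb k]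
  have hin : ∀ m, |⟪e, y m⟫| ≤ c := by
    intro m
    refine (abs_real_inner_le_norm _ _).trans ?_
    rw [hy, mul_one]; exact he
  have hc : 0 ≤ c := (norm_nonneg e).trans he
  have hs1 : ∀ k, ∑ m, A k m • η m = A k i • e := by
    intro k
    rw [Finset.sum_eq_single i]
    · simp [hη]
    · intro m _ hm; simp [hη, hm]
    · simp
  have hrow : ∑ m ∈ Finset.univ.erase i, A i m = 1 - a := by
    have := Finset.add_sum_erase Finset.univ (A i) (Finset.mem_univ i)
    rw [hA1, hAd] at this; linarith
  constructor
  · have hs2 : ∑ m, (A i m * (⟪y i, η m⟫ + ⟪η i, y m⟫)) • (y m - ∑ l, A i l • y l)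
        = ∑ m ∈ Finset.univ.erase i, (A i m * ⟪e, y m⟫) • (y m - ∑ l, A i l • y l) := by
      rw [← Finset.add_sum_erase _ _ (Finset.mem_univ i)]
      have : ⟪y i, e⟫ = 0 := by rw [real_inner_comm]; exact hei
      simp only [hη, Pi.single_eq_same, hei, this, add_zero, mul_zero, zero_smul, zero_add]
      refine Finset.sum_congr rfl fun m hm => ?_
      rw [Pi.single_eq_of_ne (Finset.ne_of_mem_erase hm)]
      simp
    have ha1 : 0 ≤ 1 - a := hrow ▸ Finset.sum_nonneg fun m _ => hA0 i m
    have hb2 : ‖∑ m ∈ Finset.univ.erase i, (A i m * ⟪e, y m⟫) • (y m - ∑ l, A i l • y l)‖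
        ≤ (1 - a) * (c * 2) := by
      refine (norm_sum_le _ _).trans ?_
      rw [← hrow, Finset.sum_mul]
      refine Finset.sum_le_sum fun m _ => ?_
      rw [norm_smul, norm_mul, Real.norm_of_nonneg (hA0 i m), mul_assoc]
      refine mul_le_mul_of_nonneg_left ?_ (hA0 i m)
      exact mul_le_mul (hin m) (h2 i m) (norm_nonneg _) hc
    rw [hD, hs1, hs2, hAd]
    have : ∀ v : E, a • e + β • v - e = (a - 1) • e + β • v := by intro v; module
    rw [this]
    refine (norm_add_le _ _).trans ?_
    rw [norm_smul, norm_smul, Real.norm_of_nonneg hβ, Real.norm_eq_abs, abs_sub_comm,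
      abs_of_nonneg ha1]
    have := mul_le_mul_of_nonneg_left hb2 hβ
    have := mul_le_mul_of_nonneg_left he ha1
    nlinarith
  · intro k hk
    have hs2 : ∑ m, (A k m * (⟪y k, η m⟫ + ⟪η k, y m⟫)) • (y m - ∑ l, A k l • y l)
        = (A k i * ⟪y k, e⟫) • (y i - ∑ l, A k l • y l) := by
      rw [Finset.sum_eq_single i]
      · simp [hη, Pi.single_eq_of_ne hk]
      · intro m _ hm; simp [hη, Pi.single_eq_of_ne hk, Pi.single_eq_of_ne hm]
      · simp
    rw [hD, hs1, hs2, hAo k i hk]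
    refine (norm_add_le _ _).trans ?_
    rw [norm_smul, norm_smul, norm_smul, norm_mul, Real.norm_of_nonneg hβ, Real.norm_of_nonneg hb,
      real_inner_comm, Real.norm_eq_abs]
    have h5 := mul_le_mul (hin k) (h2 k i) (norm_nonneg _) hc
    have := mul_le_mul_of_nonneg_left h5 (mul_nonneg hβ hb)
    have := mul_le_mul_of_nonneg_left he hb
    nlinarith

/-- the attention map -/
noncomputable def auxF {ι E : Type*} [Fintype ι] [NormedAddCommGroup E] [InnerProductSpace ℝ E]
    (β : ℝ) (X : ι → E) (k : ι) : E :=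
  (∑ l, Real.exp (β * ⟪(‖X k‖⁻¹ • X k : E), ‖X l‖⁻¹ • X l⟫))⁻¹ •
    ∑ m, Real.exp (β * ⟪(‖X k‖⁻¹ • X k : E), ‖X m‖⁻¹ • X m⟫) • (‖X m‖⁻¹ • X m)

lemma aux_diff {ι E : Type*} [Fintype ι] [NormedAddCommGroup E] [InnerProductSpace ℝ E]
    (β : ℝ) (x : ι → E) (hx : ∀ i, x i ≠ 0) : DifferentiableAt ℝ (auxF β) x := by
  rw [differentiableAt_pi]
  intro k
  have : Nonempty ι := ⟨k⟩
  have h1 : ∀ m, DifferentiableAt ℝ (fun X : ι → E => ‖X m‖⁻¹ • X m) x := by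
    intro m
    have h0 : DifferentiableAt ℝ (fun X : ι → E => X m) x := differentiableAt_apply m x
    exact ((h0.norm ℝ (hx m)).fun_inv (norm_ne_zero_iff.mpr (hx m))).fun_smul h0
  have hw : ∀ m, DifferentiableAt ℝ
      (fun X : ι → E => Real.exp (β * ⟪(‖X k‖⁻¹ • X k : E), ‖X m‖⁻¹ • X m⟫)) x :=
    fun m => (((h1 k).inner ℝ (h1 m)).const_mul β).exp
  have hpos : 0 < ∑ l, Real.exp (β * ⟪(‖x k‖⁻¹ • x k : E), ‖x l‖⁻¹ • x l⟫) :=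
    Finset.sum_pos (fun _ _ => Real.exp_pos _) Finset.univ_nonempty
  exact ((DifferentiableAt.fun_sum fun l _ => hw l).fun_inv hpos.ne').fun_smul
    (DifferentiableAt.fun_sum fun l _ => (hw l).fun_smul (h1 l))

lemma aux_fderiv {ι E : Type*} [Fintype ι] [NormedAddCommGroup E] [InnerProductSpace ℝ E]
    (β : ℝ) (x h : ι → E) (hx : ∀ i, x i ≠ 0) (y η : ι → E) (hy : ∀ i, y i = ‖x i‖⁻¹ • x i)
    (hη : ∀ i, η i = ‖x i‖⁻¹ • (h i - ⟪y i, h i⟫ • y i)) (k : ι)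
    (A : ι → ℝ)
    (hA : ∀ m, A m = (∑ l, Real.exp (β * ⟪y k, y l⟫))⁻¹ * Real.exp (β * ⟪y k, y m⟫)) :
    fderiv ℝ (auxF β) x h k = (∑ m, A m • η m + β • ∑ m, (A m * (⟪y k, η m⟫ + ⟪η k, y m⟫)) •
        (y m - ∑ l, A l • y l)) := by
  have hl : HasDerivAt (fun t : ℝ => x + t • h) h 0 := by
    simpa using ((hasDerivAt_id (0:ℝ)).smul_const h).const_add x
  have hF : HasFDerivAt (auxF β) (fderiv ℝ (auxF β) x) (x + (0:ℝ) • h) := by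
    simpa using (aux_diff β x hx).hasFDerivAt
  have h1 := (hasDerivAt_pi.mp (hF.comp_hasDerivAt (0:ℝ) hl)) k
  have h2 := aux_att_deriv (fun m t => ‖x m + t • h m‖⁻¹ • (x m + t • h m)) η
    (fun m => by rw [hη, hy]; exact aux_norm_deriv _ _ (hx m)) β k A
    (by simpa [hy] using hA)
  have := h1.unique h2
  simpa [hy] using this

lemma aux_main (N D : ℕ) (hN : 1 ≤ N) (hND : N ≤ D) (β ρ q : ℝ) (hβ : 0 ≤ β) (hq : 0 < q)
    (x : Fin N → EuclideanSpace ℝ (Fin D)) (hnorm : ∀ i, ‖x i‖ ^ 2 = q)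
    (hcos : ∀ i j : Fin N, i ≠ j →
      ⟪(‖x i‖⁻¹ • x i : EuclideanSpace ℝ (Fin D)), ‖x j‖⁻¹ • x j⟫ = ρ) (T : ℝ)
    (hT : T = N * Real.exp (-(β * (1 - ρ))) * (1 + 2 * β)) :
    |(∑ i : Fin N, ∑ u : Fin D, ∑ j : Fin N, ∑ v : Fin D,
        (fderiv ℝ (auxF β) x (Pi.single i (EuclideanSpace.single u 1)) j v) ^ 2) /
          ((N : ℝ) * D) - (1 / q) * (1 - 1 / (D : ℝ))| ≤ (2 * T + 2 * T ^ 2) / q := by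
  have hxn : ∀ i, ‖x i‖ = √q := fun i => by rw [← hnorm i, Real.sqrt_sq (norm_nonneg _)]
  have hsq : 0 < √q := Real.sqrt_pos.mpr hq
  have hx : ∀ i, x i ≠ 0 := fun i => norm_ne_zero_iff.mp (by rw [hxn]; exact hsq.ne')
  obtain ⟨y, hy⟩ : ∃ y : Fin N → EuclideanSpace ℝ (Fin D), ∀ i, y i = ‖x i‖⁻¹ • x i :=
    ⟨_, fun _ => rfl⟩
  have hy1 : ∀ i, ‖y i‖ = 1 := fun i => by
    rw [hy, norm_smul, norm_inv, norm_norm, inv_mul_cancel₀ (norm_ne_zero_iff.mpr (hx i))]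
  have hyy : ∀ i, ⟪y i, y i⟫ = (1:ℝ) := fun i => by rw [real_inner_self_eq_norm_sq, hy1]; norm_num
  have hyo : ∀ i j, i ≠ j → ⟪y i, y j⟫ = ρ := fun i j h => by rw [hy, hy]; exact hcos i j h
  obtain ⟨A, hA⟩ : ∃ A : Fin N → Fin N → ℝ, ∀ k m, A k m =
    (∑ l, Real.exp (β * ⟪y k, y l⟫))⁻¹ * Real.exp (β * ⟪y k, y m⟫) := ⟨_, fun _ _ => rfl⟩
  have hZ : ∀ k, ∑ l, Real.exp (β * ⟪y k, y l⟫) = Real.exp β + (N - 1) * Real.exp (β * ρ) := by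
    intro k
    rw [← Finset.add_sum_erase _ _ (Finset.mem_univ k), hyy, mul_one]
    congr 1
    rw [Finset.sum_congr rfl (g := fun _ => Real.exp (β * ρ))
      (fun l hl => by rw [hyo k l (Finset.ne_of_mem_erase hl).symm])]
    rw [Finset.sum_const, Finset.card_erase_of_mem (Finset.mem_univ k), Finset.card_univ,
      Fintype.card_fin, nsmul_eq_mul, Nat.cast_sub hN, Nat.cast_one]
  have hN1 : (1:ℝ) ≤ N := by exact_mod_cast hN
  obtain ⟨Z, hZd⟩ : ∃ Z, Z = Real.exp β + (N - 1) * Real.exp (β * ρ) := ⟨_, rfl⟩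
  have hZe : Real.exp β ≤ Z := by
    rw [hZd]; have := mul_nonneg (sub_nonneg.mpr hN1) (Real.exp_pos (β * ρ)).le; linarith
  have hZ0 : 0 < Z := (Real.exp_pos β).trans_le hZe
  obtain ⟨a, had⟩ : ∃ a, a = Z⁻¹ * Real.exp β := ⟨_, rfl⟩
  obtain ⟨b, hbd⟩ : ∃ b, b = Z⁻¹ * Real.exp (β * ρ) := ⟨_, rfl⟩
  have ha0 : 0 ≤ a := by rw [had]; positivity
  have hb0 : 0 ≤ b := by rw [hbd]; positivity
  have hab : 1 - a = (N - 1) * b := by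
    rw [had, hbd]
    have : Z⁻¹ * Z = 1 := inv_mul_cancel₀ hZ0.ne'
    nth_rewrite 2 [hZd] at this
    linarith
  have hbe : b ≤ Real.exp (-(β * (1 - ρ))) := by
    rw [hbd, inv_mul_le_iff₀ hZ0]
    calc Real.exp (β * ρ) = Real.exp β * Real.exp (-(β * (1 - ρ))) := by
          rw [← Real.exp_add]; congr 1; ring
      _ ≤ _ := mul_le_mul_of_nonneg_right hZe (Real.exp_pos _).le
  have hAd : ∀ k, A k k = a := fun k => by rw [hA, hZ, hyy, had, hZd, mul_one]
  have hAo : ∀ k m, k ≠ m → A k m = b := fun k m h => by rw [hA, hZ, hyo k m h, hbd, hZd]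
  have hA1 : ∀ k, ∑ m, A k m = 1 := fun k => by
    simp only [hA]
    rw [← Finset.mul_sum, hZ, ← hZd, inv_mul_cancel₀ hZ0.ne']
  have hat : (1 - a) * (1 + 2 * β) ≤ T := by
    rw [hab, hT]
    refine mul_le_mul_of_nonneg_right ?_ (by positivity)
    exact mul_le_mul (by linarith) hbe hb0 (by linarith)
  have ha1 : 0 ≤ 1 - a := by rw [hab]; exact mul_nonneg (by linarith) hb0
  have hT0 : 0 ≤ T := le_trans (mul_nonneg ha1 (by positivity)) hat
  obtain ⟨e, he⟩ : ∃ e : Fin N → Fin D → EuclideanSpace ℝ (Fin D), ∀ i u, e i u =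
    ‖x i‖⁻¹ • (EuclideanSpace.single u 1 - ⟪y i, EuclideanSpace.single u 1⟫ • y i) :=
    ⟨_, fun _ _ => rfl⟩
  have hei : ∀ i u, ⟪e i u, y i⟫ = (0:ℝ) := by
    intro i u
    rw [he, real_inner_smul_left, inner_sub_left, real_inner_smul_left, hyy, real_inner_comm]
    ring
  have hen : ∀ i u, ‖e i u‖ ^ 2 = (1 / q) * (1 - (y i u) ^ 2) := by
    intro i u
    rw [he, norm_smul, mul_pow, norm_sub_sq_real, norm_smul, real_inner_smul_right,
      real_inner_comm, hxn, hy1]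
    simp [Real.sq_sqrt hq.le, EuclideanSpace.inner_single_left]
    left; ring
  have hec : ∀ i u, ‖e i u‖ ≤ √q⁻¹ := by
    intro i u
    refine Real.le_sqrt_of_sq_le ?_
    rw [hen, one_div]
    have : 0 < q⁻¹ := inv_pos.mpr hq
    nlinarith [sq_nonneg (y i u)]
  have hes : ∀ i, ∑ u, ‖e i u‖ ^ 2 = (1 / q) * (D - 1) := by
    intro i
    simp only [hen]
    rw [← Finset.mul_sum, Finset.sum_sub_distrib]
    have := EuclideanSpace.real_norm_sq_eq (y i)
    rw [← this, hy1]
    simp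
  have key : ∀ i u, |∑ j : Fin N, ∑ v : Fin D,
        (fderiv ℝ (auxF β) x (Pi.single i (EuclideanSpace.single u 1)) j v) ^ 2 - ‖e i u‖ ^ 2|
        ≤ (2 * T + 2 * T ^ 2) / q := by
    intro i u
    obtain ⟨J, hJ⟩ : ∃ J, J = fderiv ℝ (auxF β) x (Pi.single i (EuclideanSpace.single u 1)) :=
      ⟨_, rfl⟩
    have hB := aux_bound y hy1 A a b β (√q⁻¹) hβ hb0 ha0 hAd hAo hA1 i (e i u) (hec i u) (hei i u)
      (Pi.single i (e i u)) rfl J (fun k => by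
        rw [hJ]
        refine aux_fderiv β x _ hx y _ hy ?_ k (A k) (hA k)
        intro m
        by_cases hm : m = i
        · subst hm; simp [he]
        · simp [hm])
    rw [← hJ]
    have hJn : ∀ j, ∑ v, (J j v) ^ 2 = ‖J j‖ ^ 2 := fun j =>
      (EuclideanSpace.real_norm_sq_eq (J j)).symm
    simp only [hJn]
    rw [← Finset.add_sum_erase _ _ (Finset.mem_univ i)]
    obtain ⟨h1, h2⟩ := hB
    have hsq2 : √q⁻¹ ^ 2 = q⁻¹ := Real.sq_sqrt (inv_pos.mpr hq).le
    have hc0 : 0 ≤ √q⁻¹ := Real.sqrt_nonneg _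
    have h1' : ‖J i - e i u‖ ≤ √q⁻¹ * T := h1.trans (mul_le_mul_of_nonneg_left hat hc0)
    have hS : ∑ k ∈ Finset.univ.erase i, ‖J k‖ ^ 2 ≤ q⁻¹ * T ^ 2 := by
      have : ∑ k ∈ Finset.univ.erase i, ‖J k‖ ^ 2 ≤ ∑ k ∈ Finset.univ.erase i,
          (√q⁻¹ * (b * (1 + 2 * β))) ^ 2 := by
        refine Finset.sum_le_sum fun k hk => ?_
        exact pow_le_pow_left₀ (norm_nonneg _) (h2 k (Finset.ne_of_mem_erase hk)) 2
      refine this.trans ?_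
      rw [Finset.sum_const, Finset.card_erase_of_mem (Finset.mem_univ i), Finset.card_univ,
        Fintype.card_fin, nsmul_eq_mul, mul_pow, hsq2]
      have h3 : (N - 1 : ℕ) * (b * (1 + 2 * β)) ^ 2 ≤ T ^ 2 := by
        have h4 : ((N - 1 : ℕ) : ℝ) * (b * (1 + 2 * β)) ≤ T := by
          rw [Nat.cast_sub hN, Nat.cast_one, ← mul_assoc, ← hab]; exact hat
        have h5 : (0:ℝ) ≤ ((N - 1 : ℕ) : ℝ) * (b * (1 + 2 * β)) := by positivity
        refine le_trans ?_ (pow_le_pow_left₀ h5 h4 2)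
        rw [mul_pow _ (b * (1 + 2 * β))]
        refine mul_le_mul_of_nonneg_right ?_ (sq_nonneg _)
        exact_mod_cast Nat.le_self_pow two_ne_zero _
      have := mul_le_mul_of_nonneg_left h3 (inv_pos.mpr hq).le
      linarith
    have hS0 : 0 ≤ ∑ k ∈ Finset.univ.erase i, ‖J k‖ ^ 2 :=
      Finset.sum_nonneg fun _ _ => sq_nonneg _
    have hdiff : |‖J i‖ ^ 2 - ‖e i u‖ ^ 2| ≤ q⁻¹ * (2 * T + T ^ 2) := by
      have h6 : |‖J i‖ - ‖e i u‖| ≤ √q⁻¹ * T := (abs_norm_sub_norm_le _ _).trans h1'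
      have h7 : ‖J i‖ ^ 2 - ‖e i u‖ ^ 2 = (‖J i‖ - ‖e i u‖) * (‖J i‖ + ‖e i u‖) := by ring
      rw [h7, abs_mul, abs_of_nonneg (add_nonneg (norm_nonneg (J i)) (norm_nonneg (e i u)))]
      have h8 : ‖J i‖ + ‖e i u‖ ≤ √q⁻¹ * T + 2 * √q⁻¹ := by
        have := (abs_le.mp h6).2
        linarith [hec i u]
      calc _ ≤ (√q⁻¹ * T) * (√q⁻¹ * T + 2 * √q⁻¹) :=
            mul_le_mul h6 h8 (by positivity) (by positivity)
        _ = √q⁻¹ ^ 2 * (2 * T + T ^ 2) := by ring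
        _ = _ := by rw [hsq2]
    have hfin : (2 * T + 2 * T ^ 2) / q = q⁻¹ * (2 * T + T ^ 2) + q⁻¹ * T ^ 2 := by
      rw [div_eq_inv_mul]; ring
    rw [hfin]
    rw [abs_le] at hdiff ⊢
    constructor <;> nlinarith [hdiff.1, hdiff.2]
  have hD0 : (0:ℝ) < D := by exact_mod_cast (by omega : 0 < D)
  have hN0 : (0:ℝ) < N := by linarith
  have htot : (1 / q) * (1 - 1 / (D : ℝ)) = (∑ i : Fin N, ∑ u, ‖e i u‖ ^ 2) / ((N:ℝ) * D) := by
    simp only [hes]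
    rw [Finset.sum_const, Finset.card_univ, Fintype.card_fin, nsmul_eq_mul]
    field_simp
  rw [htot, ← sub_div, abs_div, abs_of_pos (mul_pos hN0 hD0), div_le_iff₀ (mul_pos hN0 hD0),
    ← Finset.sum_sub_distrib]
  simp only [← Finset.sum_sub_distrib]
  refine (Finset.abs_sum_le_sum_abs _ _).trans ?_
  calc _ ≤ ∑ i : Fin N, ∑ u : Fin D, (2 * T + 2 * T ^ 2) / q := by
        refine Finset.sum_le_sum fun i _ => (Finset.abs_sum_le_sum_abs _ _).trans ?_
        exact Finset.sum_le_sum fun u _ => key i u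
    _ = _ := by simp; ring

lemma aux_lim (ρ γ : ℝ) (hρ : ρ ∈ Set.Ioo (0:ℝ) 1) (hγ : 1 / (1 - ρ) < γ) :
    Filter.Tendsto (fun n : ℕ => ((n + 2 : ℕ) : ℝ) *
      Real.exp (-(γ * Real.log (n + 2) * (1 - ρ))) * (1 + 2 * (γ * Real.log (n + 2))))
      Filter.atTop (nhds 0) := by
  have h1 : 0 < 1 - ρ := by linarith [hρ.2]
  have hε : 0 < γ * (1 - ρ) - 1 := by
    rw [div_lt_iff₀ h1] at hγ; linarith
  obtain ⟨ε, hεd⟩ : ∃ ε, ε = γ * (1 - ρ) - 1 := ⟨_, rfl⟩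
  rw [← hεd] at hε
  have hu : Filter.Tendsto (fun s : ℝ => Real.exp (-ε * s) * (1 + 2 * (γ * s)))
      Filter.atTop (nhds 0) := by
    have ha := tendsto_rpow_mul_exp_neg_mul_atTop_nhds_zero 0 ε hε
    have hb := tendsto_rpow_mul_exp_neg_mul_atTop_nhds_zero 1 ε hε
    have := ha.add (hb.const_mul (2 * γ))
    simp only [mul_zero, add_zero, Real.rpow_zero, Real.rpow_one] at this
    refine this.congr fun s => ?_
    ring
  have hl : Filter.Tendsto (fun n : ℕ => Real.log ((n:ℝ) + 2)) Filter.atTop Filter.atTop :=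
    Real.tendsto_log_atTop.comp
      (Filter.tendsto_atTop_add_const_right _ _ tendsto_natCast_atTop_atTop)
  refine (hu.comp hl).congr fun n => ?_
  have hp : (0:ℝ) < (n:ℝ) + 2 := by positivity
  simp only [Function.comp]
  congr 1
  push_cast
  nth_rewrite 2 [← Real.exp_log hp]
  rw [← Real.exp_add]
  congr 1
  rw [hεd]; ring

theorem stmt17 (ρ q γ : ℝ) (hρ : ρ ∈ Set.Ioo (0:ℝ) 1) (hq : 0 < q)
    (hγ : 1 / (1 - ρ) < γ)
    (d : ℕ → ℕ) (hd : ∀ n, n + 2 ≤ d n)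
    (x : (n : ℕ) → Fin (n + 2) → EuclideanSpace ℝ (Fin (d n)))
    (hnorm : ∀ n i, ‖x n i‖ ^ 2 = q)
    (hcos : ∀ n, ∀ i j : Fin (n + 2), i ≠ j →
      ⟪(‖x n i‖⁻¹ • x n i : EuclideanSpace ℝ (Fin (d n))), ‖x n j‖⁻¹ • x n j⟫ = ρ) :
    Filter.Tendsto (fun n : ℕ =>
      let β : ℝ := γ * Real.log (n + 2)
      let F : (Fin (n + 2) → EuclideanSpace ℝ (Fin (d n))) →
          (Fin (n + 2) → EuclideanSpace ℝ (Fin (d n))) := fun X k =>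
        (∑ l, Real.exp (β * ⟪(‖X k‖⁻¹ • X k : EuclideanSpace ℝ (Fin (d n))),
            ‖X l‖⁻¹ • X l⟫))⁻¹ •
          ∑ m, Real.exp (β * ⟪(‖X k‖⁻¹ • X k : EuclideanSpace ℝ (Fin (d n))),
            ‖X m‖⁻¹ • X m⟫) • (‖X m‖⁻¹ • X m)
      (∑ i : Fin (n + 2), ∑ u : Fin (d n), ∑ j : Fin (n + 2), ∑ v : Fin (d n),
        (fderiv ℝ F (x n) (Pi.single i (EuclideanSpace.single u 1)) j v) ^ 2) /
          (((n : ℝ) + 2) * (d n)) -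
        (1 / q) * (1 - 1 / (d n : ℝ)))
      Filter.atTop (nhds 0) := by
  have hl := aux_lim ρ γ hρ hγ
  have hlim := ((hl.const_mul 2).add ((hl.pow 2).const_mul 2)).div_const q
  rw [show (2 * 0 + 2 * 0 ^ 2) / q = 0 by simp] at hlim
  refine squeeze_zero_norm (fun n => ?_) hlim
  have hγ0 : 0 < γ := lt_trans (by have := hρ.2; exact one_div_pos.mpr (by linarith)) hγ
  have hβ : 0 ≤ γ * Real.log ((n:ℝ) + 2) :=
    mul_nonneg hγ0.le (Real.log_nonneg (by have : (0:ℝ) ≤ n := n.cast_nonneg; linarith))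
  have h := aux_main (n + 2) (d n) (by omega) (hd n) (γ * Real.log ((n:ℝ) + 2)) ρ q hβ hq (x n)
    (hnorm n) (hcos n) _ rfl
  rw [Real.norm_eq_abs]
  have hc : ((n + 2 : ℕ) : ℝ) = (n:ℝ) + 2 := by push_cast; ring
  nth_rewrite 1 [hc] at h
  exact h
end

section
/- Fix $\rho \in (0,1)$, $q > 0$, $0 < \gamma < \frac{1}{1-\rho}$, and $d = d(n) \ge n$. For each $n$, let $x_1,\dots,x_n \in \mathbb{R}^d$ with $\|x_i\|^2 = q$ and pairwise cosine similarity $\rho$, and let $X' = \mathcal{ATT}(\mathcal{N}(X))$ with $\beta = \gamma\log n$. Then $\frac{1}{nd}\|\nabla_X X'\|_F^2 \to 0$ as $n \to \infty$. -/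
open scoped RealInnerProductSpace BigOperators

lemma aux_normalize {E : Type*} [NormedAddCommGroup E] [InnerProductSpace ℝ E] (x : E)
    (hx : x ≠ 0) : ∃ L : E →L[ℝ] E, HasFDerivAt (fun y : E => ‖y‖⁻¹ • y) L x ∧
      ‖L‖ ≤ 2 * ‖x‖⁻¹ := by
  have hn : ‖x‖ ≠ 0 := norm_ne_zero_iff.mpr hx
  have h1 : HasFDerivAt (fun y : E => ‖y‖) (fderiv ℝ (fun y : E => ‖y‖) x) x :=
    ((differentiableAt_id).norm ℝ hx).hasFDerivAt
  have hN : ‖fderiv ℝ (fun y : E => ‖y‖) x‖ ≤ 1 := by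
    simpa using norm_fderiv_le_of_lipschitz ℝ (lipschitzWith_one_norm (E := E)) (x₀ := x)
  set M := fderiv ℝ (fun y : E => ‖y‖) x
  have h2 := (hasDerivAt_inv hn).comp_hasFDerivAt x h1
  have h3 := h2.smul (hasFDerivAt_id x)
  refine ⟨_, h3, ?_⟩
  refine ContinuousLinearMap.opNorm_le_bound _ (by positivity) fun v => ?_
  have hMv : |M v| ≤ ‖v‖ := by
    calc |M v| ≤ ‖M‖ * ‖v‖ := M.le_opNorm v
      _ ≤ 1 * ‖v‖ := by gcongr
      _ = ‖v‖ := one_mul _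
  have hp : 0 < ‖x‖ := norm_pos_iff.mpr hx
  simp only [Function.comp, id, ContinuousLinearMap.add_apply, ContinuousLinearMap.smul_apply,
    ContinuousLinearMap.smulRight_apply, ContinuousLinearMap.id_apply, smul_eq_mul]
  refine (norm_add_le _ _).trans ?_
  rw [norm_smul, norm_smul]
  simp only [norm_inv, norm_norm, norm_mul, norm_neg, norm_pow, Real.norm_eq_abs, abs_norm]
  have : (‖x‖ ^ 2)⁻¹ * |M v| * ‖x‖ ≤ (‖x‖ ^ 2)⁻¹ * ‖v‖ * ‖x‖ := by gcongr
  have e : (‖x‖ ^ 2)⁻¹ * ‖v‖ * ‖x‖ = ‖x‖⁻¹ * ‖v‖ := by field_simp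
  linarith

lemma aux_deriv {E ι : Type*} [NormedAddCommGroup E] [InnerProductSpace ℝ E] [Fintype ι]
    [Nonempty ι] (β : ℝ) (Y : ι → ℝ → E) (Y' : ι → E) (hY : ∀ m, HasDerivAt (Y m) (Y' m) 0)
    (k : ι) (A : ι → ℝ)
    (hA : ∀ m, A m = (∑ l, Real.exp (β * ⟪Y k 0, Y l 0⟫))⁻¹ * Real.exp (β * ⟪Y k 0, Y m 0⟫)) :
    HasDerivAt (fun t => (∑ l, Real.exp (β * ⟪Y k t, Y l t⟫))⁻¹ •
        ∑ m, Real.exp (β * ⟪Y k t, Y m t⟫) • Y m t)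
      (∑ m, A m • Y' m + ∑ m, (A m * (β * (⟪Y k 0, Y' m⟫ + ⟪Y' k, Y m 0⟫))) •
        (Y m 0 - ∑ l, A l • Y l 0)) 0 := by
  have hs : ∀ m, HasDerivAt (fun t => Real.exp (β * ⟪Y k t, Y m t⟫))
      (Real.exp (β * ⟪Y k 0, Y m 0⟫) * (β * (⟪Y k 0, Y' m⟫ + ⟪Y' k, Y m 0⟫))) 0 := fun m =>
    (((hY k).inner ℝ (hY m)).const_mul β).exp
  have hZ := HasDerivAt.fun_sum (u := Finset.univ) (fun m _ => hs m)
  have hZ0 : (∑ l, Real.exp (β * ⟪Y k 0, Y l 0⟫)) ≠ 0 :=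
    (Finset.sum_pos (fun _ _ => Real.exp_pos _) Finset.univ_nonempty).ne'
  have hN := HasDerivAt.fun_sum (u := Finset.univ) (fun m _ => (hs m).fun_smul (hY m))
  have := (hZ.fun_inv hZ0).fun_smul hN
  refine this.congr_deriv ?_
  set Z := ∑ l, Real.exp (β * ⟪Y k 0, Y l 0⟫)
  set c : ι → ℝ := fun m => β * (⟪Y k 0, Y' m⟫ + ⟪Y' k, Y m 0⟫) with hc
  have e1 : ∑ l, A l • Y l 0 = Z⁻¹ • ∑ m, Real.exp (β * ⟪Y k 0, Y m 0⟫) • Y m 0 := by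
    rw [Finset.smul_sum]; exact Finset.sum_congr rfl fun m _ => by rw [hA, mul_smul]
  rw [e1]
  set G := ∑ m, Real.exp (β * ⟪Y k 0, Y m 0⟫) • Y m 0
  simp only [smul_sub]
  rw [Finset.sum_sub_distrib, ← Finset.sum_smul, Finset.sum_add_distrib, smul_add,
    Finset.smul_sum, Finset.smul_sum]
  have f1 : ∑ m, A m * c m = Z⁻¹ * ∑ m, Real.exp (β * ⟪Y k 0, Y m 0⟫) * c m := by
    rw [Finset.mul_sum]; exact Finset.sum_congr rfl fun m _ => by rw [hA, mul_assoc]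
  have f2 : ∑ m, A m • Y' m = ∑ m, Z⁻¹ • Real.exp (β * ⟪Y k 0, Y m 0⟫) • Y' m :=
    Finset.sum_congr rfl fun m _ => by rw [hA, mul_smul]
  have f3 : ∑ m, (A m * c m) • Y m 0 =
      ∑ m, Z⁻¹ • (Real.exp (β * ⟪Y k 0, Y m 0⟫) * c m) • Y m 0 :=
    Finset.sum_congr rfl fun m _ => by rw [hA, mul_assoc, mul_smul]
  have f4 : (-∑ i, Real.exp (β * ⟪Y k 0, Y i 0⟫) * c i) / Z ^ 2 =
    -((∑ m, A m * c m) * Z⁻¹) := by rw [f1]; field_simp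
  have f5 : (∑ m, A m * c m) • Z⁻¹ • G = ((∑ m, A m * c m) * Z⁻¹) • G := (mul_smul _ _ _).symm
  change _ + _ + ((-∑ i, Real.exp (β * ⟪Y k 0, Y i 0⟫) * c i) / Z ^ 2) • G =
    ∑ m, A m • Y' m + (∑ m, (A m * c m) • Y m 0 - (∑ m, A m * c m) • Z⁻¹ • G)
  rw [f4, f5, f2, f3, neg_smul]
  abel

lemma aux_bound_s18 {E ι : Type*} [NormedAddCommGroup E] [InnerProductSpace ℝ E] [Fintype ι]
    (A c : ι → ℝ) (hA : ∀ m, 0 ≤ A m) (hA1 : ∑ m, A m = 1) (y : ι → E) (hy : ∀ m, ‖y m‖ ≤ 1) :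
    ‖∑ m, (A m * c m) • (y m - ∑ l, A l • y l)‖ ^ 2 ≤ 4 * ∑ m, A m * c m ^ 2 := by
  have hF : ‖∑ l, A l • y l‖ ≤ 1 := by
    refine (norm_sum_le _ _).trans ?_
    rw [← hA1]
    refine Finset.sum_le_sum fun m _ => ?_
    rw [norm_smul, Real.norm_of_nonneg (hA m)]
    exact mul_le_of_le_one_right (hA m) (hy m)
  have h1 : ‖∑ m, (A m * c m) • (y m - ∑ l, A l • y l)‖ ≤ 2 * ∑ m, A m * |c m| := by
    refine (norm_sum_le _ _).trans ?_
    rw [Finset.mul_sum]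
    refine Finset.sum_le_sum fun m _ => ?_
    rw [norm_smul, norm_mul, Real.norm_of_nonneg (hA m), Real.norm_eq_abs, mul_comm]
    have : ‖y m - ∑ l, A l • y l‖ ≤ 2 := (norm_sub_le _ _).trans (by linarith [hy m])
    have := hA m
    gcongr
  have h2 : (∑ m, A m * |c m|) ^ 2 ≤ ∑ m, A m * |c m| ^ 2 :=
    Real.pow_arith_mean_le_arith_mean_pow Finset.univ A (fun m => |c m|) (fun m _ => hA m) hA1
      (fun m _ => abs_nonneg _) 2
  simp only [sq_abs] at h2
  calc _ ≤ (2 * ∑ m, A m * |c m|) ^ 2 := by gcongr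
    _ = 4 * (∑ m, A m * |c m|) ^ 2 := by ring
    _ ≤ _ := by gcongr

lemma aux_inner_sum {D : ℕ} (L : EuclideanSpace ℝ (Fin D) →L[ℝ] EuclideanSpace ℝ (Fin D))
    (y : EuclideanSpace ℝ (Fin D)) (hy : ‖y‖ ≤ 1) :
    ∑ u, ⟪y, L (EuclideanSpace.single u 1)⟫ ^ 2 ≤ ‖L‖ ^ 2 := by
  have : ∀ u, ⟪y, L (EuclideanSpace.single u 1)⟫ = (ContinuousLinearMap.adjoint L y) u := by
    intro u
    rw [← ContinuousLinearMap.adjoint_inner_left]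
    simp [EuclideanSpace.inner_single_right]
  simp only [this]
  rw [← EuclideanSpace.real_norm_sq_eq]
  have h := (ContinuousLinearMap.adjoint L).le_opNorm y
  rw [LinearIsometryEquiv.norm_map] at h
  have : ‖L‖ * ‖y‖ ≤ ‖L‖ := mul_le_of_le_one_right (norm_nonneg _) hy
  gcongr
  linarith

lemma aux_main_s18 {N D : ℕ} [NeZero N] (ρ r β C a : ℝ) (hβ : 0 ≤ β) (hr : 0 < r)
    (hρ1 : ρ ≤ 1)
    (x : Fin N → EuclideanSpace ℝ (Fin D)) (hx : ∀ i, ‖x i‖ = r)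
    (hcos : ∀ i j : Fin N, i ≠ j →
      ⟪(‖x i‖⁻¹ • x i : EuclideanSpace ℝ (Fin D)), ‖x j‖⁻¹ • x j⟫ = ρ)
    (hC : C = (2 * r⁻¹) ^ 2)
    (ha : a = Real.exp β / (N * Real.exp (β * ρ)))
    (F : (Fin N → EuclideanSpace ℝ (Fin D)) → (Fin N → EuclideanSpace ℝ (Fin D)))
    (hF : F = fun X k =>
        (∑ l, Real.exp (β * ⟪(‖X k‖⁻¹ • X k : EuclideanSpace ℝ (Fin D)),
            ‖X l‖⁻¹ • X l⟫))⁻¹ •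
          ∑ m, Real.exp (β * ⟪(‖X k‖⁻¹ • X k : EuclideanSpace ℝ (Fin D)),
            ‖X m‖⁻¹ • X m⟫) • (‖X m‖⁻¹ • X m)) :
    ∑ i : Fin N, ∑ u : Fin D, ∑ j : Fin N, ∑ v : Fin D,
        (fderiv ℝ F x (Pi.single i (EuclideanSpace.single u 1)) j v) ^ 2 ≤
      N * (2 * C * a * D + 32 * β ^ 2 * C) := by
  have hx0 : ∀ i, x i ≠ 0 := fun i h => by
    have := hx i; rw [h, norm_zero] at this; linarith
  choose L hL hLn using fun i => aux_normalize (x i) (hx0 i)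
  have hLC : ∀ i, ‖L i‖ ^ 2 ≤ C := fun i => by
    rw [hC]; have := hLn i; rw [hx] at this; gcongr
  have hC0 : 0 ≤ C := by rw [hC]; positivity
  have hdiff : DifferentiableAt ℝ F x := by
    have hy : ∀ m, DifferentiableAt ℝ
        (fun X : Fin N → EuclideanSpace ℝ (Fin D) => ‖X m‖⁻¹ • X m) x := fun m =>
      (HasFDerivAt.comp (g := fun y : EuclideanSpace ℝ (Fin D) => ‖y‖⁻¹ • y)
        (f := fun X : Fin N → EuclideanSpace ℝ (Fin D) => X m) x (hL m)
        (hasFDerivAt_apply m x)).differentiableAt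
    rw [hF, differentiableAt_pi]
    intro k
    have he : ∀ m, DifferentiableAt ℝ (fun X : Fin N → EuclideanSpace ℝ (Fin D) =>
        Real.exp (β * ⟪(‖X k‖⁻¹ • X k : EuclideanSpace ℝ (Fin D)), ‖X m‖⁻¹ • X m⟫)) x := fun m =>
      (((hy k).inner ℝ (hy m)).const_mul β).exp
    refine DifferentiableAt.fun_smul (DifferentiableAt.fun_inv
      (DifferentiableAt.fun_sum fun m _ => he m) ?_) (DifferentiableAt.fun_sum fun m _ => (he m).fun_smul (hy m))
    exact (Finset.sum_pos (fun _ _ => Real.exp_pos _) Finset.univ_nonempty).ne'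
  set y : Fin N → EuclideanSpace ℝ (Fin D) := fun m => ‖x m‖⁻¹ • x m with hydef
  have hy1 : ∀ m, ‖y m‖ = 1 := fun m => by
    simp only [hydef, norm_smul, norm_inv, norm_norm]
    exact inv_mul_cancel₀ (norm_ne_zero_iff.mpr (hx0 m))
  set Z : Fin N → ℝ := fun k => ∑ l, Real.exp (β * ⟪y k, y l⟫) with hZ
  have hZ0 : ∀ k, 0 < Z k := fun k =>
    Finset.sum_pos (fun _ _ => Real.exp_pos _) Finset.univ_nonempty
  set A : Fin N → Fin N → ℝ := fun k m => (Z k)⁻¹ * Real.exp (β * ⟪y k, y m⟫) with hA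
  have hA0 : ∀ k m, 0 ≤ A k m := fun k m => by have := hZ0 k; positivity
  have hA1 : ∀ k, ∑ m, A k m = 1 := fun k => by
    simp only [hA]; rw [← Finset.mul_sum]; exact inv_mul_cancel₀ (hZ0 k).ne'
  have hin : ∀ k m, ρ ≤ ⟪y k, y m⟫ ∧ ⟪y k, y m⟫ ≤ 1 := fun k m => by
    by_cases h : k = m
    · subst h; rw [real_inner_self_eq_norm_sq, hy1]; constructor <;> linarith
    · rw [hcos k m h]; exact ⟨le_rfl, hρ1⟩
  have hN0 : (0:ℝ) < N := by exact_mod_cast Nat.pos_of_ne_zero (NeZero.ne N)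
  have hAa : ∀ k m, A k m ≤ a := fun k m => by
    have h1 : N * Real.exp (β * ρ) ≤ Z k := by
      have : ∑ l : Fin N, Real.exp (β * ρ) ≤ Z k := Finset.sum_le_sum fun l _ =>
        Real.exp_le_exp.mpr (mul_le_mul_of_nonneg_left (hin k l).1 hβ)
      simpa using this
    have h2 : Real.exp (β * ⟪y k, y m⟫) ≤ Real.exp β :=
      Real.exp_le_exp.mpr (mul_le_of_le_one_right hβ (hin k m).2)
    rw [ha]
    simp only [hA]
    rw [inv_mul_eq_div]
    gcongr
  -- formula for the derivative
  have hform : ∀ i u j, fderiv ℝ F x (Pi.single i (EuclideanSpace.single u 1)) j =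
      A j i • L i (EuclideanSpace.single u 1) +
      ∑ m, (A j m * (β * ((if m = i then ⟪y j, L i (EuclideanSpace.single u 1)⟫ else 0)
        + (if j = i then ⟪y m, L i (EuclideanSpace.single u 1)⟫ else 0)))) •
        (y m - ∑ l, A j l • y l) := by
    intro i u j
    set e : EuclideanSpace ℝ (Fin D) := EuclideanSpace.single u 1
    set V : Fin N → EuclideanSpace ℝ (Fin D) := Pi.single i e with hV
    have h1 : HasDerivAt (fun t : ℝ => F (x + t • V) j) (fderiv ℝ F x V j) 0 :=
      hasDerivAt_pi.mp (hdiff.hasFDerivAt.hasLineDerivAt V) j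
    have hYd : ∀ m, HasDerivAt (fun t : ℝ => ‖(x + t • V) m‖⁻¹ • (x + t • V) m) (L m (V m)) 0 := by
      intro m
      have hp : HasDerivAt (fun t : ℝ => (x + t • V) m) (V m) 0 := by
        have := ((hasDerivAt_id (0:ℝ)).smul_const (V m)).const_add (x m)
        simpa using this
      have hLm : HasFDerivAt (fun y : EuclideanSpace ℝ (Fin D) => ‖y‖⁻¹ • y) (L m)
          ((x + (0:ℝ) • V) m) := by simpa using hL m
      exact hLm.comp_hasDerivAt (0:ℝ) hp
    have h2 := aux_deriv β (fun m (t : ℝ) => ‖(x + t • V) m‖⁻¹ • (x + t • V) m)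
      (fun m => L m (V m)) hYd j (A j) (by intro m; simp [hA, hZ, hydef])
    have h3 := h1.unique (by rw [hF]; exact h2)
    rw [h3]
    have hLV : ∀ m, L m (V m) = if m = i then L i e else 0 := fun m => by
      by_cases h : m = i
      · subst h; simp [hV]
      · simp [hV, h]
    have hy' : ∀ m, ‖(x + (0:ℝ) • V) m‖⁻¹ • (x + (0:ℝ) • V) m = y m := by intro m; simp [hydef]
    simp only [hLV, hy']
    congr 1
    · simp
    · refine Finset.sum_congr rfl fun m _ => ?_
      congr 4
      · split_ifs <;> simp
      · split_ifs
        · rw [real_inner_comm]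
        · simp
  have hcol : ∀ i j, ∑ u, ‖fderiv ℝ F x (Pi.single i (EuclideanSpace.single u 1)) j‖ ^ 2 ≤
      2 * C * D * (a * A j i) + 16 * β ^ 2 * C * (A j i + if j = i then 1 else 0) := by
    intro i j
    have hLe : ∑ u : Fin D, ‖L i (EuclideanSpace.single u 1)‖ ^ 2 ≤ D * C := by
      have : ∑ u : Fin D, ‖L i (EuclideanSpace.single u 1)‖ ^ 2 ≤ ∑ u : Fin D, C := by
        refine Finset.sum_le_sum fun u _ => ?_
        have := (L i).le_opNorm (EuclideanSpace.single u 1)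
        simp only [EuclideanSpace.norm_single, norm_one, mul_one] at this
        refine le_trans ?_ (hLC i)
        gcongr
      simpa using this
    have hI : ∀ m, ∑ u, ⟪y m, L i (EuclideanSpace.single u 1)⟫ ^ 2 ≤ C := fun m =>
      (aux_inner_sum (L i) (y m) (hy1 m).le).trans (hLC i)
    have hpt : ∀ u, ‖fderiv ℝ F x (Pi.single i (EuclideanSpace.single u 1)) j‖ ^ 2 ≤
        2 * (A j i ^ 2 * ‖L i (EuclideanSpace.single u 1)‖ ^ 2) + 16 * β ^ 2 *
          ∑ m, A j m * ((if m = i then ⟪y j, L i (EuclideanSpace.single u 1)⟫ ^ 2 else 0)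
            + (if j = i then ⟪y m, L i (EuclideanSpace.single u 1)⟫ ^ 2 else 0)) := by
      intro u
      rw [hform]
      have hb := aux_bound_s18 (A j) (fun m =>
        (β * ((if m = i then ⟪y j, L i (EuclideanSpace.single u 1)⟫ else 0)
        + (if j = i then ⟪y m, L i (EuclideanSpace.single u 1)⟫ else 0)))) (hA0 j) (hA1 j) y
        (fun m => (hy1 m).le)
      have hc : ∑ m, A j m * (β * ((if m = i then ⟪y j, L i (EuclideanSpace.single u 1)⟫ else 0)
        + (if j = i then ⟪y m, L i (EuclideanSpace.single u 1)⟫ else 0))) ^ 2 ≤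
          2 * β ^ 2 * ∑ m, A j m * ((if m = i then ⟪y j, L i (EuclideanSpace.single u 1)⟫ ^ 2 else 0)
            + (if j = i then ⟪y m, L i (EuclideanSpace.single u 1)⟫ ^ 2 else 0)) := by
        rw [Finset.mul_sum]
        refine Finset.sum_le_sum fun m _ => ?_
        have key : ∀ p q : ℝ, A j m * (β * (p + q)) ^ 2 ≤
            2 * β ^ 2 * (A j m * (p ^ 2 + q ^ 2)) := fun p q => by
          have : 0 ≤ A j m * β ^ 2 * (p - q) ^ 2 := by have := hA0 j m; positivity
          nlinarith
        refine (key _ _).trans (le_of_eq ?_)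
        congr 3 <;> split_ifs <;> simp
      have hpar : ∀ p w : EuclideanSpace ℝ (Fin D), ‖p + w‖ ^ 2 ≤ 2 * ‖p‖ ^ 2 + 2 * ‖w‖ ^ 2 := by
        intro p w
        have := norm_add_le p w
        nlinarith [norm_nonneg (p + w), norm_nonneg p, norm_nonneg w, sq_nonneg (‖p‖ - ‖w‖)]
      refine (hpar _ _).trans ?_
      rw [norm_smul, mul_pow, Real.norm_eq_abs, sq_abs]
      linarith
    refine (Finset.sum_le_sum fun u _ => hpt u).trans ?_
    rw [Finset.sum_add_distrib, ← Finset.mul_sum, ← Finset.mul_sum, ← Finset.mul_sum,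
      Finset.sum_comm]
    simp only [← Finset.mul_sum, Finset.sum_add_distrib]
    have hs : ∑ m, A j m * (∑ u, (if m = i then ⟪y j, L i (EuclideanSpace.single u 1)⟫ ^ 2 else 0)
            + ∑ u, (if j = i then ⟪y m, L i (EuclideanSpace.single u 1)⟫ ^ 2 else 0)) ≤
        ∑ m, A j m * ((if m = i then C else 0) + (if j = i then C else 0)) := by
      refine Finset.sum_le_sum fun m _ => mul_le_mul_of_nonneg_left ?_ (hA0 j m)
      refine add_le_add ?_ ?_
      · split_ifs
        · exact hI j
        · simp
      · split_ifs
        · exact hI m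
        · simp
    have hs2 : ∑ m, A j m * ((if m = i then C else 0) + (if j = i then C else 0)) =
        C * (A j i + if j = i then 1 else 0) := by
      simp only [mul_add, Finset.sum_add_distrib, ← Finset.sum_mul, hA1]
      simp [mul_comm]
    have ht : A j i ^ 2 * ∑ u : Fin D, ‖L i (EuclideanSpace.single u 1)‖ ^ 2 ≤
        (a * A j i) * (D * C) := by
      have h1 : A j i ^ 2 ≤ a * A j i := by
        rw [sq]; exact mul_le_mul_of_nonneg_right (hAa j i) (hA0 j i)
      have := (sq_nonneg (A j i)).trans h1
      gcongr
    rw [hs2] at hs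
    have := mul_le_mul_of_nonneg_left hs (show 0 ≤ 16 * β ^ 2 by positivity)
    linarith
  calc _ = ∑ j : Fin N, ∑ i : Fin N, ∑ u : Fin D,
        ‖fderiv ℝ F x (Pi.single i (EuclideanSpace.single u 1)) j‖ ^ 2 := by
        simp only [← EuclideanSpace.real_norm_sq_eq]
        rw [Finset.sum_comm (s := (Finset.univ : Finset (Fin N))) (t := (Finset.univ : Finset (Fin N)))]
        exact Finset.sum_congr rfl fun i _ => Finset.sum_comm
    _ ≤ ∑ j : Fin N, ∑ i : Fin N, (2 * C * D * (a * A j i) +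
          16 * β ^ 2 * C * (A j i + if j = i then 1 else 0)) :=
        Finset.sum_le_sum fun j _ => Finset.sum_le_sum fun i _ => hcol i j
    _ = ∑ j : Fin N, (2 * C * a * D + 32 * β ^ 2 * C) := by
        refine Finset.sum_congr rfl fun j _ => ?_
        have h1 : ∑ i, (2 * C * D * (a * A j i) +
          16 * β ^ 2 * C * (A j i + if j = i then 1 else 0)) =
          2 * C * D * a * ∑ i, A j i + 16 * β ^ 2 * C * (∑ i, A j i +
            ∑ i, if j = i then 1 else 0) := by
          rw [← Finset.sum_add_distrib, Finset.mul_sum, Finset.mul_sum, ← Finset.sum_add_distrib]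
          exact Finset.sum_congr rfl fun i _ => by ring
        rw [h1, hA1]
        simp
        ring
    _ = _ := by rw [Finset.sum_const, Finset.card_univ, Fintype.card_fin, nsmul_eq_mul]

theorem stmt18 (ρ q γ : ℝ) (hρ : ρ ∈ Set.Ioo (0:ℝ) 1) (hq : 0 < q)
    (hγ0 : 0 < γ) (hγ : γ < 1 / (1 - ρ))
    (d : ℕ → ℕ) (hd : ∀ n, n + 2 ≤ d n)
    (x : (n : ℕ) → Fin (n + 2) → EuclideanSpace ℝ (Fin (d n)))
    (hnorm : ∀ n i, ‖x n i‖ ^ 2 = q)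
    (hcos : ∀ n, ∀ i j : Fin (n + 2), i ≠ j →
      ⟪(‖x n i‖⁻¹ • x n i : EuclideanSpace ℝ (Fin (d n))), ‖x n j‖⁻¹ • x n j⟫ = ρ) :
    Filter.Tendsto (fun n : ℕ =>
      let β : ℝ := γ * Real.log (n + 2)
      let F : (Fin (n + 2) → EuclideanSpace ℝ (Fin (d n))) →
          (Fin (n + 2) → EuclideanSpace ℝ (Fin (d n))) := fun X k =>
        (∑ l, Real.exp (β * ⟪(‖X k‖⁻¹ • X k : EuclideanSpace ℝ (Fin (d n))),
            ‖X l‖⁻¹ • X l⟫))⁻¹ •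
          ∑ m, Real.exp (β * ⟪(‖X k‖⁻¹ • X k : EuclideanSpace ℝ (Fin (d n))),
            ‖X m‖⁻¹ • X m⟫) • (‖X m‖⁻¹ • X m)
      (∑ i : Fin (n + 2), ∑ u : Fin (d n), ∑ j : Fin (n + 2), ∑ v : Fin (d n),
        (fderiv ℝ F (x n) (Pi.single i (EuclideanSpace.single u 1)) j v) ^ 2) /
          (((n : ℝ) + 2) * (d n)))
      Filter.atTop (nhds 0) := by
  obtain ⟨hρ0, hρ1⟩ := hρ
  have hδ : γ * (1 - ρ) < 1 := by rwa [lt_div_iff₀ (by linarith)] at hγ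
  set r := Real.sqrt q
  have hr : 0 < r := Real.sqrt_pos.mpr hq
  have hxr : ∀ n i, ‖x n i‖ = r := fun n i => by
    
    have := Real.sqrt_sq (norm_nonneg (x n i))
    rw [hnorm n i] at this; exact this.symm
  set C := (2 * r⁻¹) ^ 2 with hC
  have hC0 : 0 ≤ C := by positivity
  have hT : Filter.Tendsto (fun n : ℕ => (n : ℝ) + 2) Filter.atTop Filter.atTop :=
    Filter.tendsto_atTop_add_const_right _ _ tendsto_natCast_atTop_atTop
  have hlog := Real.tendsto_log_atTop.comp hT
  have hlim1 : Filter.Tendsto (fun n : ℕ => Real.exp (-((1 - γ * (1 - ρ)) * Real.log ((n:ℝ) + 2))))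
      Filter.atTop (nhds 0) :=
    Real.tendsto_exp_neg_atTop_nhds_zero.comp (hlog.const_mul_atTop (by linarith))
  have hlim2 : Filter.Tendsto (fun n : ℕ => Real.log ((n:ℝ) + 2) ^ 2 / ((n:ℝ) + 2))
      Filter.atTop (nhds 0) := by
    have := (Real.tendsto_pow_log_div_mul_add_atTop 1 0 2 one_ne_zero).comp hT
    simpa [Function.comp_def] using this
  have hlim : Filter.Tendsto (fun n : ℕ =>
      2 * C * Real.exp (-((1 - γ * (1 - ρ)) * Real.log ((n:ℝ) + 2))) +
      32 * γ ^ 2 * C * (Real.log ((n:ℝ) + 2) ^ 2 / ((n:ℝ) + 2))) Filter.atTop (nhds 0) := by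
    simpa using (hlim1.const_mul (2 * C)).add (hlim2.const_mul (32 * γ ^ 2 * C))
  refine squeeze_zero (fun n => ?_) (fun n => ?_) hlim
  · positivity
  · have hlog0 : 0 ≤ Real.log ((n:ℝ) + 2) := Real.log_nonneg (by linarith [n.cast_nonneg (α := ℝ)])
    have hmain := aux_main_s18 ρ r (γ * Real.log (n + 2)) C _ (by positivity) hr hρ1.le (x n) (hxr n)
      (hcos n) hC rfl _ rfl
    have hN : (0:ℝ) < (n:ℝ) + 2 := by positivity
    have hdn : (n:ℝ) + 2 ≤ d n := by exact_mod_cast hd n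
    have hD : (0:ℝ) < d n := by linarith
    dsimp only
    rw [div_le_iff₀ (by positivity)]
    refine hmain.trans ?_
    have ea : Real.exp (γ * Real.log (n + 2)) / (((n + 2 : ℕ) : ℝ) *
        Real.exp (γ * Real.log (n + 2) * ρ)) =
        Real.exp (-((1 - γ * (1 - ρ)) * Real.log ((n:ℝ) + 2))) := by
      have : ((n + 2 : ℕ) : ℝ) = Real.exp (Real.log ((n:ℝ) + 2)) := by
        rw [Real.exp_log hN]; push_cast; ring
      rw [this, ← Real.exp_add, ← Real.exp_sub]
      congr 1; ring
    rw [ea]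
    push_cast
    have h5 : 1 ≤ (d n : ℝ) / ((n:ℝ) + 2) := by rwa [one_le_div hN]
    have h6 : 0 ≤ 32 * (γ * Real.log ((n:ℝ) + 2)) ^ 2 * C := by positivity
    have h7 := mul_le_mul_of_nonneg_left h5 h6
    calc _ ≤ ((n:ℝ) + 2) * (2 * C * Real.exp (-((1 - γ * (1 - ρ)) * Real.log ((n:ℝ) + 2))) * d n
          + 32 * (γ * Real.log ((n:ℝ) + 2)) ^ 2 * C * ((d n : ℝ) / ((n:ℝ) + 2))) := by
          refine mul_le_mul_of_nonneg_left ?_ hN.le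
          linarith
      _ = _ := by field_simp
end
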